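/- arXiv:2602.22838 — 2 statements merged into one kernel-verified Lean document; each statement's English description precedes it below -/
import Mathlib

section
/- Let F be any social choice correspondence that is (1) neutral, (2) biranking-majority-consistent, and (3) majoritarian. Then for every integer k with 1 ≤ k < n−2, F is not k-augmentation strategyproof (and for k = 0 this follows from the Gibbard–Satterthwaite theorem); consequently the manipulation potential of F satisfies Φ(F) ≥ n−2. -/
open Finset

/-- A strict linear preference order over `m` candidates, encoded as the permutation sending
each candidate to its rank; rank `0` is the most preferred position, so
`c ≻ c'` iff `p c < p c'`. -/
abbrev Pref (m : ℕ) := Equiv.Perm (Fin m)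

/-- A profile of `N` voters, each with a strict preference over `m` candidates. -/
abbrev Profile (m N : ℕ) := Fin N → Pref m

/-- A social choice correspondence: for each number `N` of voters, it maps each `N`-voter
profile to a set of (tied) winners. -/
abbrev SCC (m : ℕ) := (N : ℕ) → Profile m N → Finset (Fin m)

/-- The profile `P` with `k` extra copies of voter `i`'s preference appended. -/
def addCopies {m n : ℕ} (P : Profile m n) (i : Fin n) (k : ℕ) : Profile m (n + k) :=
  fun j => if h : (j : ℕ) < n then P ⟨j, h⟩ else P i

/-- Break a tie among the candidates in `A` using the linear tie-breaking order `τ`: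
the winner is the `τ`-maximal (lowest `τ`-rank) element of `A`. -/
noncomputable def tiebreak {m : ℕ} [NeZero m] (τ : Pref m) (A : Finset (Fin m)) : Fin m :=
  if h : A.Nonempty then τ.symm ((A.image (fun c => τ c)).min' (h.image _)) else 0

/-- `F` is `k`-augmentation strategyproof on `n`-voter profiles: for every tie-breaker `τ`,
profile `P`, voter `i`, and alternative preference `q`, voter `i` weakly prefers the outcome
obtained by adding `k` truthful copies of her vote to the outcome of the manipulation `q`. -/
def kASP (m n : ℕ) [NeZero m] (F : SCC m) (k : ℕ) : Prop :=
  ∀ (τ : Pref m) (P : Profile m n) (i : Fin n) (q : Pref m),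
    (P i) (tiebreak τ (F (n + k) (addCopies P i k))) ≤
      (P i) (tiebreak τ (F n (Function.update P i q)))

/-- The manipulation potential of `F` on `n`-voter profiles: the least `k` such that `F` is
`k'`-augmentation strategyproof for all `k' ≥ k`, and `⊤` (i.e. `∞`) if no such `k` exists. -/
noncomputable def manipPot (m n : ℕ) [NeZero m] (F : SCC m) : ℕ∞ :=
  sInf ((fun k : ℕ => (k : ℕ∞)) '' {k : ℕ | ∀ k' : ℕ, k ≤ k' → kASP m n F k'})

/-- The margin of `c` against `d`: the number of voters preferring `c` to `d` minus the
number of voters preferring `d` to `c`. -/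
def margin {m N : ℕ} (P : Profile m N) (c d : Fin m) : ℤ :=
  ((Finset.univ.filter (fun i => P i c < P i d)).card : ℤ) -
    ((Finset.univ.filter (fun i => P i d < P i c)).card : ℤ)

/-!
Name three candidates `a = 0`, `b = 1`, `c = 2`; all voters rank the others below these in the same
order. Let one voter report `a ≻ b ≻ c`, let `⌊n/2⌋` voters report `b ≻ c ≻ a` and `⌊(n-1)/2⌋`
voters report `c ≻ a ≻ b`. After adding `k` copies of the first voter, any two blocks outweigh the
third, so the majority relation is that of the three-voter Condorcet cycle, and by neutrality the
set of winners is invariant under rotating `a`, `b`, `c`. Breaking ties by `c ≻ a ≻ b`, the winner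
is neither `a` nor `b`, since otherwise `c` would be tied with it. If the first voter instead
reports `b ≻ a ≻ c`, the majority relation becomes the ranking `b ≻ c ≻ a`, so `b` wins, which she
prefers.
-/

/-- The vote of a ranking `p` on the ordered pair `(c, d)`: `1` if `p` ranks `c` above `d`, `-1` if
it ranks `d` above `c`, and `0` if `c = d`. Margins are sums of votes. -/
def vote {m : ℕ} (p : Pref m) (c d : Fin m) : ℤ :=
  if p c < p d then 1 else if p d < p c then -1 else 0

/-- The profile consisting of one voter with ranking `p`, listed first, followed by `a` voters with
ranking `q` and `b` voters with ranking `r`. -/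
def threeBlock {m : ℕ} (p q r : Pref m) (a b : ℕ) : Profile m (a + b + 1) :=
  Fin.cons p (Fin.append (fun _ : Fin a => q) (fun _ : Fin b => r))

/-- Neutrality: relabeling the candidates relabels the winners. -/
def SCC.IsNeutral {m : ℕ} (F : SCC m) : Prop :=
  ∀ (π : Equiv.Perm (Fin m)) (N : ℕ) (P : Profile m N) (c : Fin m),
    c ∈ F N P ↔ π c ∈ F N (fun i => Equiv.trans π.symm (P i))

/-- Majoritarianism: the winners depend only on the majority relation, whatever the number of
voters. -/
def SCC.IsMajoritarian {m : ℕ} (F : SCC m) : Prop :=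
  ∀ (N N' : ℕ) (P : Profile m N) (P' : Profile m N'),
    (∀ c d : Fin m, (margin P c d).sign = (margin P' c d).sign) → F N P = F N' P'

/-- Faithfulness: a single voter gets exactly her top choice. For majoritarian correspondences this
is equivalent to biranking-majority-consistency. -/
def SCC.IsFaithful {m : ℕ} [NeZero m] (F : SCC m) : Prop :=
  ∀ p : Pref m, F 1 (fun _ => p) = {p.symm 0}

section Votes

variable {m : ℕ} {p q r : Pref m} {c d : Fin m}

theorem vote_self (p : Pref m) (c : Fin m) : vote p c c = 0 := by
  simp [vote]

theorem vote_eq_one_or_neg_one (p : Pref m) (hcd : c ≠ d) :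
    vote p c d = 1 ∨ vote p c d = -1 := by
  have hp : p c ≠ p d := p.injective.ne hcd
  grind [vote]

theorem vote_eq_vote_iff : vote p c d = vote q c d ↔ (p c < p d ↔ q c < q d) := by
  obtain rfl | hcd := eq_or_ne c d
  · simp [vote_self]
  · have hp : p c ≠ p d := p.injective.ne hcd
    have hq : q c ≠ q d := q.injective.ne hcd
    grind [vote]

theorem sign_vote (p : Pref m) (c d : Fin m) : (vote p c d).sign = vote p c d := by
  unfold vote
  split_ifs <;> rfl

theorem sign_weighted_votes_of_agree {w₁ w₂ w₃ : ℕ} (hpq : vote p c d = vote q c d)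
    (hw : w₃ < w₁ + w₂) :
    (w₁ * vote p c d + w₂ * vote q c d + w₃ * vote r c d).sign = vote p c d := by
  obtain rfl | hcd := eq_or_ne c d
  · simp [vote_self]
  · rw [← hpq]
    obtain hp | hp := vote_eq_one_or_neg_one p hcd <;>
      obtain hr | hr := vote_eq_one_or_neg_one r hcd <;> rw [hp, hr]
    · exact Int.sign_eq_one_of_pos (by lia)
    · exact Int.sign_eq_one_of_pos (by lia)
    · exact Int.sign_eq_neg_one_of_neg (by lia)
    · exact Int.sign_eq_neg_one_of_neg (by lia)

theorem two_votes_agree (p q r : Pref m) (c d : Fin m) :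
    vote p c d = vote q c d ∨ vote q c d = vote r c d ∨ vote r c d = vote p c d := by
  simp only [vote_eq_vote_iff]
  tauto

theorem sign_weighted_votes_eq_sign_votes {w₁ w₂ w₃ : ℕ} (h₁ : w₁ < w₂ + w₃) (h₂ : w₂ < w₃ + w₁)
    (h₃ : w₃ < w₁ + w₂) (p q r : Pref m) (c d : Fin m) :
    (w₁ * vote p c d + w₂ * vote q c d + w₃ * vote r c d).sign =
      (vote p c d + vote q c d + vote r c d).sign := by
  -- Two of the three rankings agree on the pair, and they outweigh the third on either side.
  wlog hpq : vote p c d = vote q c d generalizing p q r w₁ w₂ w₃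
  · obtain h | hqr | hrp := two_votes_agree p q r c d
    · exact absurd h hpq
    · convert this h₂ h₃ h₁ q r p hqr using 2 <;> ring
    · convert this h₃ h₁ h₂ r p q hrp using 2 <;> ring
  · have unit_weights := sign_weighted_votes_of_agree (r := r) hpq (show 1 < 1 + 1 by decide)
    simp only [Nat.cast_one, one_mul] at unit_weights
    rw [sign_weighted_votes_of_agree hpq h₃, unit_weights]

end Votes

section Margins

variable {m : ℕ}

theorem margin_eq_sum_vote {N : ℕ} (P : Profile m N) (c d : Fin m) :
    margin P c d = ∑ i, vote (P i) c d := by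
  simp only [margin, card_filter, Nat.cast_sum, ← sum_sub_distrib]
  refine sum_congr rfl fun i _ => ?_
  grind [vote]

theorem margin_append {M N : ℕ} (P : Profile m M) (Q : Profile m N) (c d : Fin m) :
    margin (Fin.append P Q) c d = margin P c d + margin Q c d := by
  simp only [margin_eq_sum_vote, Fin.sum_univ_add, Fin.append_left, Fin.append_right]

theorem margin_cons {N : ℕ} (p : Pref m) (P : Profile m N) (c d : Fin m) :
    margin (Fin.cons p P : Profile m (N + 1)) c d = vote p c d + margin P c d := by
  simp only [margin_eq_sum_vote, Fin.sum_univ_succ, Fin.cons_zero, Fin.cons_succ]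

theorem margin_const (N : ℕ) (p : Pref m) (c d : Fin m) :
    margin (fun _ : Fin N => p) c d = N * vote p c d := by
  simp [margin_eq_sum_vote]

theorem margin_comp_perm {N : ℕ} (σ : Equiv.Perm (Fin N)) (P : Profile m N) (c d : Fin m) :
    margin (P ∘ σ) c d = margin P c d := by
  simp only [margin_eq_sum_vote, Function.comp_apply]
  exact Equiv.sum_comp σ fun i => vote (P i) c d

theorem addCopies_eq_append {N : ℕ} (P : Profile m N) (i : Fin N) (k : ℕ) :
    addCopies P i k = Fin.append P (fun _ => P i) := by
  funext j
  cases j using Fin.addCases <;> simp [addCopies]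

theorem margin_threeBlock (p q r : Pref m) (a b : ℕ) (c d : Fin m) :
    margin (threeBlock p q r a b) c d = vote p c d + a * vote q c d + b * vote r c d := by
  rw [threeBlock, margin_cons, margin_append, margin_const, margin_const, add_assoc]

theorem margin_addCopies_threeBlock (p q r : Pref m) (a b k : ℕ) (c d : Fin m) :
    margin (addCopies (threeBlock p q r a b) 0 k) c d =
      (k + 1 : ℕ) * vote p c d + a * vote q c d + b * vote r c d := by
  rw [addCopies_eq_append, margin_append, margin_const, margin_threeBlock]
  simp only [threeBlock, Fin.cons_zero]
  push_cast
  ring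

theorem update_threeBlock_zero (p p' q r : Pref m) (a b : ℕ) :
    Function.update (threeBlock p q r a b) 0 p' = threeBlock p' q r a b :=
  Fin.update_cons_zero _ _ _

end Margins

section MajoritarianCorrespondences

variable {m : ℕ} {F : SCC m}

theorem SCC.IsMajoritarian.comp_perm (hF : F.IsMajoritarian) {N : ℕ} (σ : Equiv.Perm (Fin N))
    (P : Profile m N) : F N (P ∘ σ) = F N P :=
  hF _ _ _ _ fun c d => by rw [margin_comp_perm]

theorem SCC.IsMajoritarian.addCopies_threeBlock (hF : F.IsMajoritarian) {a b k : ℕ}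
    (hk : k + 1 < a + b) (ha : a < b + (k + 1)) (hb : b < k + 1 + a) (p q r : Pref m) :
    F _ (addCopies (threeBlock p q r a b) 0 k) = F 3 ![p, q, r] := by
  refine hF _ _ _ _ fun c d => ?_
  rw [margin_addCopies_threeBlock, sign_weighted_votes_eq_sign_votes hk ha hb,
    margin_eq_sum_vote, Fin.sum_univ_three]
  rfl

theorem SCC.IsMajoritarian.threeBlock_eq_of_between (hF : F.IsMajoritarian) {a b : ℕ}
    (hab : 1 < a + b) (hba : b < a + 1) {p q r : Pref m}
    (hq : ∀ c d, vote q c d = vote p c d ∨ vote q c d = vote r c d) :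
    F _ (threeBlock p q r a b) = F 1 (fun _ => q) := by
  refine hF _ _ _ _ fun c d => ?_
  rw [margin_threeBlock, margin_const, Nat.cast_one, one_mul, sign_vote]
  obtain hqp | hqr := hq c d
  · convert sign_weighted_votes_of_agree (r := r) hqp hba using 2
    push_cast
    ring
  · convert sign_weighted_votes_of_agree (r := p) hqr hab using 2
    push_cast
    ring

theorem SCC.IsMajoritarian.mem_condorcetCycle_iff (hF : F.IsMajoritarian) (hneutral : F.IsNeutral)
    {ρ : Equiv.Perm (Fin m)} (hρ : ρ ^ 3 = 1) (c : Fin m) :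
    c ∈ F 3 ![1, ρ⁻¹, ρ] ↔ ρ c ∈ F 3 ![1, ρ⁻¹, ρ] := by
  have hρρ : ρ⁻¹ * ρ⁻¹ = ρ := by
    rw [← mul_inv_rev, inv_eq_iff_mul_eq_one, ← hρ, pow_three']
  have relabel_eq_rotate : (fun i => Equiv.trans ρ.symm ((![1, ρ⁻¹, ρ] : Profile m 3) i)) =
      ![1, ρ⁻¹, ρ] ∘ finRotate 3 := by
    funext i
    fin_cases i
    · exact one_mul ρ⁻¹
    · exact hρρ
    · exact mul_inv_cancel ρ
  rw [hneutral ρ, relabel_eq_rotate, hF.comp_perm]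

end MajoritarianCorrespondences

section Tiebreaking

variable {m : ℕ} [NeZero m] (τ : Pref m) {A : Finset (Fin m)}

theorem tiebreak_mem (hA : A.Nonempty) : tiebreak τ A ∈ A := by
  obtain ⟨c, hc, hτc⟩ := mem_image.1 ((A.image fun c => τ c).min'_mem (hA.image _))
  rwa [tiebreak, dif_pos hA, ← hτc, Equiv.symm_apply_apply]

theorem apply_tiebreak_le {c : Fin m} (hc : c ∈ A) : τ (tiebreak τ A) ≤ τ c := by
  rw [tiebreak, dif_pos ⟨c, hc⟩, Equiv.apply_symm_apply]
  exact min'_le _ _ (mem_image_of_mem _ hc)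

theorem tiebreak_singleton (c : Fin m) : tiebreak τ {c} = c :=
  mem_singleton.1 (tiebreak_mem τ (singleton_nonempty c))

end Tiebreaking

section Manipulation

variable {m : ℕ}

theorem SCC.isFaithful_of_biranking [NeZero m] [Nontrivial (Fin m)] {F : SCC m}
    (hbir : ∀ (N : ℕ) (P : Profile m N) (a b : Pref m),
      (∀ i, P i = a ∨ P i = b) →
      (Finset.univ.filter (fun i => P i = b)).card <
        (Finset.univ.filter (fun i => P i = a)).card →
      F N P = {a.symm 0}) : F.IsFaithful := by
  intro p
  obtain ⟨q, hqp⟩ := exists_ne p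
  exact hbir 1 _ p q (fun _ => Or.inl rfl) (by simp [hqp.symm])

theorem val_cycleRange (i j : Fin m) :
    (Fin.cycleRange i j : ℕ) =
      if (j : ℕ) < i then (j : ℕ) + 1 else if (j : ℕ) = i then 0 else (j : ℕ) := by
  obtain hj | hj := le_or_gt j i
  · rw [Fin.coe_cycleRange_of_le hj]
    grind
  · rw [Fin.cycleRange_of_gt hj]
    grind

theorem val_cycleRange_symm (i j : Fin m) :
    ((Fin.cycleRange i).symm j : ℕ) =
      if (j : ℕ) = 0 then (i : ℕ) else if (j : ℕ) ≤ i then (j : ℕ) - 1 else (j : ℕ) := by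
  have h := val_cycleRange i ((Fin.cycleRange i).symm j)
  rw [Equiv.apply_symm_apply] at h
  grind

-- With `0`, `1`, `2` named `a`, `b`, `c`, the rankings are `b ≻ c ≻ a`, `b ≻ a ≻ c`, `c ≻ a ≻ b`.
theorem vote_cycleRange_two_inv_between (c d : Fin (m + 3)) :
    vote (Fin.cycleRange 2)⁻¹ c d = vote (Fin.cycleRange 1) c d ∨
      vote (Fin.cycleRange 2)⁻¹ c d = vote (Fin.cycleRange 2) c d := by
  simp only [vote_eq_vote_iff, Fin.lt_def, val_cycleRange, Equiv.Perm.inv_def,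
    val_cycleRange_symm, Fin.val_one, Fin.val_two]
  grind

theorem one_lt_tiebreak_cycleRange_two {A : Finset (Fin (m + 3))} (hA : A.Nonempty)
    (hρ : ∀ c, c ∈ A → Fin.cycleRange 2 c ∈ A) : 1 < tiebreak (Fin.cycleRange 2) A := by
  by_contra! hle
  have winner_mem := tiebreak_mem (Fin.cycleRange 2) hA
  have one_mem : 1 ∈ A := by
    obtain hlt | heq := hle.lt_or_eq
    · exact hρ 0 ((Fin.lt_one_iff _).1 hlt ▸ winner_mem)
    · exact heq ▸ winner_mem
  have two_mem : 2 ∈ A := hρ 1 one_mem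
  have winner_eq_two : tiebreak (Fin.cycleRange 2) A = 2 := by
    apply (Fin.cycleRange 2).injective
    rw [Fin.cycleRange_self, ← Fin.le_zero_iff, ← Fin.cycleRange_self 2]
    exact apply_tiebreak_le _ two_mem
  rw [winner_eq_two, Fin.le_def, Fin.val_one, Fin.val_two] at hle
  lia

theorem SCC.not_kASP_of_threeBlock {F : SCC (m + 3)}
    (hne : ∀ N (P : Profile (m + 3) N), (F N P).Nonempty) (hneutral : F.IsNeutral)
    (hmajor : F.IsMajoritarian) (hfaith : F.IsFaithful) {a b k : ℕ} (hk : k + 1 < a + b)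
    (ha : a ≤ b + k) (hb : b ≤ a) : ¬ kASP (m + 3) (a + b + 1) F k := by
  intro hASP
  set ρ : Pref (m + 3) := Fin.cycleRange 2
  have hρ : ρ ^ 3 = 1 :=
    orderOf_dvd_iff_pow_eq_one.1 Fin.isThreeCycle_cycleRange_two.orderOf.dvd
  have truthful : F _ (addCopies (threeBlock 1 ρ⁻¹ ρ a b) 0 k) = F 3 ![1, ρ⁻¹, ρ] :=
    hmajor.addCopies_threeBlock hk (by lia) (by lia) 1 ρ⁻¹ ρ
  have manipulated :
      F _ (Function.update (threeBlock 1 ρ⁻¹ ρ a b) 0 (Fin.cycleRange 1)) = {1} := by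
    rw [update_threeBlock_zero, hmajor.threeBlock_eq_of_between (by lia) (by lia)
      vote_cycleRange_two_inv_between, hfaith]
    rfl
  have truthful_le := hASP ρ (threeBlock 1 ρ⁻¹ ρ a b) 0 (Fin.cycleRange 1)
  rw [truthful, manipulated, tiebreak_singleton] at truthful_le
  exact truthful_le.not_gt (one_lt_tiebreak_cycleRange_two (hne _ _)
    fun c => (hmajor.mem_condorcetCycle_iff hneutral hρ c).1)

theorem SCC.not_kASP_of_lt_sub_two {F : SCC (m + 3)}
    (hne : ∀ N (P : Profile (m + 3) N), (F N P).Nonempty) (hneutral : F.IsNeutral)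
    (hmajor : F.IsMajoritarian) (hfaith : F.IsFaithful) {n k : ℕ} (hk : k < n - 2)
    (hnk : Odd n ∨ 1 ≤ k) : ¬ kASP (m + 3) n F k := by
  have blocks_eq : n / 2 + (n - 1) / 2 + 1 = n := by lia
  rw [← blocks_eq]
  exact SCC.not_kASP_of_threeBlock hne hneutral hmajor hfaith (by lia) (by grind) (by lia)

theorem succ_le_manipPot_of_not_kASP [NeZero m] {n k : ℕ} {F : SCC m} (h : ¬ kASP m n F k) :
    ((k + 1 : ℕ) : ℕ∞) ≤ manipPot m n F := by
  refine le_sInf ?_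
  rintro _ ⟨l, hl, rfl⟩
  rw [Nat.cast_le, Nat.succ_le_iff]
  by_contra! hlk
  exact h (hl k hlk)

end Manipulation

/-- Any neutral, biranking-majority-consistent, majoritarian social
choice correspondence `F` is not `k`-augmentation strategyproof for any `1 ≤ k < n − 2`
(for `k = 0` this follows from the Gibbard–Satterthwaite theorem); consequently
`Φ(F) ≥ n − 2`. -/
theorem majoritarian_birankingMajority_manipPot_ge (m n : ℕ) [NeZero m]
    (hm : 3 ≤ m) (hn : 2 ≤ n) (F : SCC m)
    (hFne : ∀ (N : ℕ) (P : Profile m N), (F N P).Nonempty)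
    -- neutrality: relabeling the candidates by a permutation `π` relabels the winners
    (hneutral : ∀ (π : Equiv.Perm (Fin m)) (N : ℕ) (P : Profile m N) (c : Fin m),
      c ∈ F N P ↔ π c ∈ F N (fun i => Equiv.trans π.symm (P i)))
    -- biranking-majority-consistency: on a profile with only two rankings, one strictly
    -- more frequent, the unique winner is the top choice of the more frequent ranking
    (hbir : ∀ (N : ℕ) (P : Profile m N) (a b : Pref m),
      (∀ i, P i = a ∨ P i = b) →
      (Finset.univ.filter (fun i => P i = b)).card <
        (Finset.univ.filter (fun i => P i = a)).card →
      F N P = {a.symm 0})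
    -- majoritarian: the winners depend only on the signs of the pairwise margins
    (hmajor : ∀ (N N' : ℕ) (P : Profile m N) (P' : Profile m N'),
      (∀ c d : Fin m, (margin P c d).sign = (margin P' c d).sign) → F N P = F N' P') :
    (∀ k : ℕ, 1 ≤ k → k < n - 2 → ¬ kASP m n F k) ∧
      ((n - 2 : ℕ) : ℕ∞) ≤ manipPot m n F := by
  obtain ⟨m, rfl⟩ := Nat.exists_eq_add_of_le' hm
  have not_kASP : ∀ {k : ℕ}, k < n - 2 → Odd n ∨ 1 ≤ k → ¬ kASP (m + 3) n F k :=
    SCC.not_kASP_of_lt_sub_two hFne hneutral hmajor (SCC.isFaithful_of_biranking hbir)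
  refine ⟨fun k hk hkn => not_kASP hkn (Or.inr hk), ?_⟩
  obtain hn2 | hn3 := hn.eq_or_lt
  · simp [← hn2]
  · have hnot : ¬ kASP (m + 3) n F (n - 3) := not_kASP (by lia) (by grind)
    have hsucc : n - 3 + 1 = n - 2 := by lia
    exact hsucc ▸ succ_le_manipPot_of_not_kASP hnot
end

section
/- Assume m ≥ 5. Then for every integer k ≥ 0, Copeland's rule is not k-augmentation group-strategyproof: there exist a profile ≻, a coalition S of voters, alternative preferences ≻'_S for the coalition, and a tie-breaker τ such that every voter in S strictly prefers Copeland_τ(≻'_S, ≻_{−S}) to Copeland_τ(≻ + k(≻_S)), where ≻ + k(≻_S) appends k copies of each coalition member's truthful preference. Consequently the group manipulation potential of Copeland is ∞. -/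
open Finset

/-- Copeland score of `c`: one point per pairwise majority victory, half a point per
pairwise tie. -/
def copelandScore {m N : ℕ} (P : Profile m N) (c : Fin m) : ℚ :=
  (((Finset.univ.erase c).filter (fun d => 0 < margin P c d)).card : ℚ) +
    (((Finset.univ.erase c).filter (fun d => margin P c d = 0)).card : ℚ) / 2

/-- Copeland's rule: the candidates with maximal Copeland score. -/
def copeland (m : ℕ) : SCC m := fun _ P =>
  Finset.univ.filter (fun c => ∀ c', copelandScore P c' ≤ copelandScore P c)

/-- The profile `P` with `k` extra copies of the truthful preference of each member of the
coalition `S` appended. -/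
def addGroupCopies {m n : ℕ} [NeZero n] (P : Profile m n) (S : Finset (Fin n)) (k : ℕ) :
    Profile m (n + k * S.card) :=
  fun j => if h : (j : ℕ) < n then P ⟨j, h⟩
    else P ((S.sort (· ≤ ·)).getD (((j : ℕ) - n) % S.card) 0)

/-- `F` is `k`-augmentation group-strategyproof: for every tie-breaker `τ`, profile (over
any number of voters), nonempty coalition `S`, and joint manipulation `q`, some member of
`S` weakly prefers the outcome obtained by appending `k` truthful copies of each member of
`S` to the outcome of the group manipulation. -/
def kGSP (m : ℕ) [NeZero m] (F : SCC m) (k : ℕ) : Prop :=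
  ∀ (n : ℕ) [NeZero n] (τ : Pref m) (P : Profile m n) (S : Finset (Fin n)),
    S.Nonempty → ∀ q : Fin n → Pref m,
      ∃ i ∈ S,
        (P i) (tiebreak τ (F (n + k * S.card) (addGroupCopies P S k))) ≤
          (P i) (tiebreak τ (F n (fun j => if j ∈ S then q j else P j)))

/-- The group manipulation potential of `F`: the least `k` such that `F` is `k'`-augmentation
group-strategyproof for all `k' ≥ k`, and `⊤` (i.e. `∞`) if no such `k` exists. -/
noncomputable def groupManipPot (m : ℕ) [NeZero m] (F : SCC m) : ℕ∞ :=
  sInf ((fun k : ℕ => (k : ℕ∞)) '' {k : ℕ | ∀ k' : ℕ, k ≤ k' → kGSP m F k'})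

/-!
The counterexample is the Condorcet cycle on three candidates `0, 1, 2`, with all other candidates
at the bottom: voters `1 ≻ 2 ≻ 0`, `0 ≻ 1 ≻ 2` and `2 ≻ 0 ≻ 1`, where the coalition consists of the
last two. The coalition is unanimous about `0 ≻ 1` and split on `1, 2` and on `2, 0`, so appending
copies of it only reinforces the majority of `0` over `1` and keeps the cycle: `0, 1, 2` stay tied
under Copeland's rule, and a tie-breaker can select `1`. If instead both members report
`0 ≻ 1 ≻ 2`, then `0` becomes the Condorcet winner, which both of them prefer to `1`.
-/

section Margin

variable {m N : ℕ}

/-- The margin of `c` against `d` in a single ballot: `1` if `c` is ranked above `d`, `-1` if it is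
ranked below, and `0` if `c = d`. Margins of profiles are sums of ballot margins. -/
def ballotMargin (p : Pref m) (c d : Fin m) : ℤ :=
  (if p c < p d then 1 else 0) - (if p d < p c then 1 else 0)

lemma ballotMargin_of_lt {p : Pref m} {c d : Fin m} (h : p c < p d) : ballotMargin p c d = 1 := by
  simp [ballotMargin, h, h.le]

lemma neg_one_le_ballotMargin (p : Pref m) (c d : Fin m) : -1 ≤ ballotMargin p c d := by
  unfold ballotMargin
  split_ifs <;> norm_num

lemma ballotMargin_of_top [NeZero m] {p : Pref m} {c d : Fin m} (hc : p c = 0) (hd : d ≠ c) :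
    ballotMargin p c d = 1 := by
  have hpd : p d ≠ 0 := hc ▸ p.injective.ne hd
  exact ballotMargin_of_lt (hc ▸ Fin.pos_iff_ne_zero.mpr hpd)

lemma margin_eq_sum_ballotMargin (P : Profile m N) (c d : Fin m) :
    margin P c d = ∑ i, ballotMargin (P i) c d := by
  simp only [margin, ballotMargin, sum_sub_distrib, sum_boole]

lemma margin_swap (P : Profile m N) (c d : Fin m) : margin P d c = -margin P c d :=
  (neg_sub _ _).symm

lemma ne_of_margin_pos {P : Profile m N} {c d : Fin m} (h : 0 < margin P c d) : c ≠ d := by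
  rintro rfl
  exact h.ne' (sub_self _)

end Margin

lemma margin_addGroupCopies {m n : ℕ} [NeZero n] (P : Profile m n) (S : Finset (Fin n)) (k : ℕ)
    (c d : Fin m) :
    margin (addGroupCopies P S k) c d =
      margin P c d + k * ∑ i ∈ S, ballotMargin (P i) c d := by
  have old (j : Fin n) : addGroupCopies P S k (Fin.castAdd _ j) = P j := by
    simp [addGroupCopies]
  have new (r : Fin k) (j : Fin #S) :
      addGroupCopies P S k (Fin.natAdd n (finProdFinEquiv (r, j))) = P (S.orderIsoOfFin rfl j) := by
    simp [addGroupCopies, Nat.mod_eq_of_lt j.isLt, orderEmbOfFin_apply]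
  have coalition : ∑ j, ballotMargin (P (S.orderIsoOfFin rfl j)) c d =
      ∑ i ∈ S, ballotMargin (P i) c d :=
    ((S.orderIsoOfFin rfl).toEquiv.sum_comp fun i => ballotMargin (P i) c d).trans
      (sum_coe_sort S fun i => ballotMargin (P i) c d)
  rw [margin_eq_sum_ballotMargin, margin_eq_sum_ballotMargin, Fin.sum_univ_add,
    ← finProdFinEquiv.sum_comp, Fintype.sum_prod_type]
  simp only [old, new, coalition, sum_const, card_univ, Fintype.card_fin, nsmul_eq_mul]

section Copeland

variable {m N : ℕ} {P : Profile m N} {c d w x : Fin m}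

lemma card_le_copelandScore {T : Finset (Fin m)} (h : ∀ d ∈ T, 0 < margin P c d) :
    (#T : ℚ) ≤ copelandScore P c := by
  have hT : T ⊆ {d ∈ univ.erase c | 0 < margin P c d} := fun d hd => by
    simpa [(ne_of_margin_pos (h d hd)).symm] using h d hd
  calc (#T : ℚ) ≤ #{d ∈ univ.erase c | 0 < margin P c d} := mod_cast card_le_card hT
    _ ≤ copelandScore P c := le_add_of_nonneg_right (by positivity)

lemma copelandScore_add_two_le_of_defeated (h : 0 < margin P d c) : copelandScore P c + 2 ≤ m := by
  set wins : Finset (Fin m) := {e ∈ univ.erase c | 0 < margin P c e} with hwins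
  set ties : Finset (Fin m) := {e ∈ univ.erase c | margin P c e = 0} with hties
  have hdisj : Disjoint wins ties := disjoint_filter.mpr fun _ _ hpos => hpos.ne'
  have hsub : wins ∪ ties ⊆ {d, c}ᶜ := fun e he => by
    have := margin_swap P c d
    simp only [hwins, hties, mem_union, mem_filter, mem_erase] at he
    simp only [mem_compl, mem_insert, mem_singleton, not_or]
    refine ⟨?_, by tauto⟩
    rintro rfl
    omega
  have hcard : #wins + #ties + 2 ≤ m := by
    have hle := card_le_card hsub
    have hcompl := card_add_card_compl {d, c}
    rw [card_union_of_disjoint hdisj] at hle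
    rw [card_pair (ne_of_margin_pos h), Fintype.card_fin] at hcompl
    omega
  calc copelandScore P c + 2 = #wins + (#ties : ℚ) / 2 + 2 := rfl
    _ ≤ #wins + #ties + 2 := by gcongr; exact half_le_self (by positivity)
    _ ≤ m := mod_cast hcard

/-- `w` is the Condorcet winner of `P`: it beats every other candidate in a pairwise majority
comparison. -/
def IsCondorcetWinner (P : Profile m N) (w : Fin m) : Prop :=
  ∀ d, d ≠ w → 0 < margin P w d

lemma isCondorcetWinner_of_majority_top [NeZero m] {T : Finset (Fin N)} (hT : N < 2 * #T)
    (htop : ∀ i ∈ T, P i w = 0) : IsCondorcetWinner P w := by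
  intro d hd
  have inside : ∑ i ∈ T, ballotMargin (P i) w d = #T := by
    rw [sum_congr rfl fun i hi => ballotMargin_of_top (htop i hi) hd, sum_const, nsmul_one]
  have outside : -(#Tᶜ : ℤ) ≤ ∑ i ∈ Tᶜ, ballotMargin (P i) w d := by
    simpa using card_nsmul_le_sum Tᶜ _ _ fun i _ => neg_one_le_ballotMargin (P i) w d
  have hcompl := card_add_card_compl T
  rw [Fintype.card_fin] at hcompl
  rw [margin_eq_sum_ballotMargin, ← sum_add_sum_compl T, inside]
  omega

lemma IsCondorcetWinner.copeland_eq (h : IsCondorcetWinner P w) : copeland m N P = {w} := by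
  have hw : (m : ℚ) - 1 ≤ copelandScore P w := by
    simpa [card_compl, Nat.cast_pred w.pos] using
      card_le_copelandScore (T := {w}ᶜ) fun d hd => h d (by simpa using hd)
  have hlt (c : Fin m) (hc : c ≠ w) : copelandScore P c < copelandScore P w := by
    linarith [copelandScore_add_two_le_of_defeated (h c hc)]
  ext c
  simp only [copeland, mem_filter, mem_univ, true_and, mem_singleton]
  refine ⟨fun hc => by_contra fun hne => (hlt c hne).not_ge (hc w), ?_⟩
  rintro rfl c'
  rcases eq_or_ne c' c with rfl | hne
  exacts [le_rfl, (hlt c' hne).le]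

lemma mem_copeland_of_forall_defeated (hw : ∀ d, d ≠ w → d ≠ x → 0 < margin P w d)
    (hdef : ∀ c, ∃ d, 0 < margin P d c) : w ∈ copeland m N P := by
  have hcard : (m : ℚ) ≤ #({w, x}ᶜ : Finset (Fin m)) + 2 := by
    have hcompl := card_add_card_compl {w, x}
    rw [Fintype.card_fin] at hcompl
    have := card_le_two (a := w) (b := x)
    exact_mod_cast (show m ≤ #({w, x}ᶜ : Finset (Fin m)) + 2 by omega)
  have hscore : (#({w, x}ᶜ : Finset (Fin m)) : ℚ) ≤ copelandScore P w :=
    card_le_copelandScore fun d hd => by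
      simp only [mem_compl, mem_insert, mem_singleton, not_or] at hd
      exact hw d hd.1 hd.2
  simp only [copeland, mem_filter, mem_univ, true_and]
  intro c
  obtain ⟨d, hd⟩ := hdef c
  linarith [copelandScore_add_two_le_of_defeated hd]

end Copeland

lemma tiebreak_eq_of_forall_le {m : ℕ} [NeZero m] {τ : Pref m} {A : Finset (Fin m)} {w : Fin m}
    (hw : w ∈ A) (hmin : ∀ c ∈ A, τ w ≤ τ c) : tiebreak τ A = w := by
  rw [tiebreak, dif_pos ⟨w, hw⟩, Equiv.symm_apply_eq]
  refine le_antisymm (min'_le _ _ (mem_image_of_mem _ hw)) (le_min' _ _ _ ?_)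
  simpa using hmin

lemma groupManipPot_eq_top_iff {m : ℕ} [NeZero m] {F : SCC m} :
    groupManipPot m F = ⊤ ↔ ∀ k, ∃ k', k ≤ k' ∧ ¬ kGSP m F k' := by
  simp [groupManipPot, sInf_eq_top]

section CondorcetCycle

variable {n : ℕ}

/-- The ballot `2 ≻ 0 ≻ 1 ≻ 3 ≻ 4 ≻ ⋯`; its inverse is the ballot `1 ≻ 2 ≻ 0 ≻ 3 ≻ 4 ≻ ⋯`. -/
def rotatedPref (n : ℕ) : Pref (n + 3) := Fin.cycleRange 2

/-- Condorcet's cyclic profile, with ballots `1 ≻ 2 ≻ 0`, `0 ≻ 1 ≻ 2` and `2 ≻ 0 ≻ 1` on the first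
three candidates, all other candidates being ranked below these. -/
def condorcetProfile (n : ℕ) : Profile (n + 3) 3 := ![(rotatedPref n)⁻¹, 1, rotatedPref n]

lemma fin_one_lt_two : (1 : Fin (n + 3)) < 2 := by
  rw [Fin.lt_def, Fin.val_one, Fin.val_two]
  exact one_lt_two

lemma rotatedPref_zero : rotatedPref n 0 = 1 := by
  rw [rotatedPref, Fin.cycleRange_of_lt (Fin.pos_of_ne_zero two_ne_zero), zero_add]

lemma rotatedPref_one : rotatedPref n 1 = 2 := by
  rw [rotatedPref, Fin.cycleRange_of_lt fin_one_lt_two]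
  rfl

lemma rotatedPref_two : rotatedPref n 2 = 0 :=
  Fin.cycleRange_self _

lemma rotatedPref_inv_one : (rotatedPref n)⁻¹ 1 = 0 :=
  Equiv.Perm.inv_eq_iff_eq.mpr rotatedPref_zero.symm

lemma rotatedPref_inv_two_lt_zero : (rotatedPref n)⁻¹ 2 < (rotatedPref n)⁻¹ 0 := by
  rw [Equiv.Perm.inv_eq_iff_eq.mpr rotatedPref_one.symm,
    Equiv.Perm.inv_eq_iff_eq.mpr rotatedPref_two.symm]
  exact fin_one_lt_two

lemma margin_addGroupCopies_condorcetProfile (k : ℕ) (c d : Fin (n + 3)) :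
    margin (addGroupCopies (condorcetProfile n) {1, 2} k) c d =
      ballotMargin (rotatedPref n)⁻¹ c d +
        (k + 1) * (ballotMargin 1 c d + ballotMargin (rotatedPref n) c d) := by
  rw [margin_addGroupCopies, margin_eq_sum_ballotMargin, Fin.sum_univ_three, sum_pair (by decide)]
  simp only [condorcetProfile, Matrix.cons_val]
  ring

lemma one_mem_copeland_addGroupCopies_condorcetProfile (k : ℕ) :
    1 ∈ copeland (n + 3) _ (addGroupCopies (condorcetProfile n) {1, 2} k) := by
  have one_beats (d : Fin (n + 3)) (h₁ : d ≠ 1) (h₀ : d ≠ 0) :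
      0 < margin (addGroupCopies (condorcetProfile n) {1, 2} k) 1 d := by
    have hlt : (1 : Pref (n + 3)) 1 < (1 : Pref (n + 3)) d :=
      (Fin.one_le_of_ne_zero h₀).lt_of_ne h₁.symm
    rw [margin_addGroupCopies_condorcetProfile, ballotMargin_of_top rotatedPref_inv_one h₁,
      ballotMargin_of_lt hlt]
    nlinarith [neg_one_le_ballotMargin (rotatedPref n) 1 d]
  have two_beats_zero : 0 < margin (addGroupCopies (condorcetProfile n) {1, 2} k) 2 0 := by
    rw [margin_addGroupCopies_condorcetProfile,
      ballotMargin_of_lt rotatedPref_inv_two_lt_zero,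
      ballotMargin_of_top rotatedPref_two two_ne_zero.symm]
    nlinarith [neg_one_le_ballotMargin (1 : Pref (n + 3)) 2 0]
  have zero_beats_one : 0 < margin (addGroupCopies (condorcetProfile n) {1, 2} k) 0 1 := by
    have hlt : rotatedPref n 0 < rotatedPref n 1 := by
      simpa only [rotatedPref_zero, rotatedPref_one] using fin_one_lt_two
    rw [margin_addGroupCopies_condorcetProfile,
      ballotMargin_of_top (Equiv.Perm.one_apply 0) one_ne_zero, ballotMargin_of_lt hlt]
    linarith [neg_one_le_ballotMargin (rotatedPref n)⁻¹ 0 1]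
  refine mem_copeland_of_forall_defeated (x := 0) one_beats fun c => ?_
  rcases eq_or_ne c 0 with rfl | h₀
  · exact ⟨2, two_beats_zero⟩
  rcases eq_or_ne c 1 with rfl | h₁
  · exact ⟨0, zero_beats_one⟩
  · exact ⟨1, one_beats c h₁ h₀⟩

lemma not_kGSP_copeland (n k : ℕ) : ¬ kGSP (n + 3) (copeland (n + 3)) k := by
  intro h
  obtain ⟨i, hi, hle⟩ :=
    h 3 (rotatedPref n)⁻¹ (condorcetProfile n) {1, 2} (insert_nonempty _ _) fun _ => 1
  have augmented : tiebreak (rotatedPref n)⁻¹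
      (copeland (n + 3) _ (addGroupCopies (condorcetProfile n) {1, 2} k)) = 1 :=
    tiebreak_eq_of_forall_le (one_mem_copeland_addGroupCopies_condorcetProfile k)
      (by simp [rotatedPref_inv_one])
  have manipulated : IsCondorcetWinner
      (fun j => if j ∈ ({1, 2} : Finset (Fin 3)) then 1 else condorcetProfile n j) 0 :=
    isCondorcetWinner_of_majority_top (T := {1, 2}) (by decide)
      fun i hi => by rw [if_pos hi, Equiv.Perm.one_apply]
  rw [augmented, manipulated.copeland_eq, tiebreak_eq_of_forall_le (mem_singleton_self 0) (by simp)]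
    at hle
  rw [mem_insert, mem_singleton] at hi
  rcases hi with rfl | rfl
  · simp [condorcetProfile] at hle
  · exact fin_one_lt_two.not_ge
      (by simpa [condorcetProfile, rotatedPref_zero, rotatedPref_one] using hle)

end CondorcetCycle

theorem copeland_groupManipPot_infinite_general (m : ℕ) [NeZero m] (hm : 3 ≤ m) :
    (∀ k : ℕ, ¬ kGSP m (copeland m) k) ∧ groupManipPot m (copeland m) = ⊤ := by
  obtain ⟨n, rfl⟩ := Nat.exists_eq_add_of_le' hm
  exact ⟨not_kGSP_copeland n,
    groupManipPot_eq_top_iff.mpr fun k => ⟨k, le_rfl, not_kGSP_copeland n k⟩⟩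

/-- For `m ≥ 5`: Copeland's rule is not `k`-augmentation
group-strategyproof for any `k ≥ 0`; consequently its group manipulation potential
is `∞`. -/
theorem copeland_groupManipPot_infinite (m : ℕ) [NeZero m] (hm : 5 ≤ m) :
    (∀ k : ℕ, ¬ kGSP m (copeland m) k) ∧ groupManipPot m (copeland m) = ⊤ :=
  copeland_groupManipPot_infinite_general m (by omega)
end
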